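/- arXiv:1807.06307 — 5 statements merged into one kernel-verified Lean document; each statement's English description precedes it below -/
import Mathlib

section
/- Let k ≥ 1 be an integer and let μ, λ be real numbers. Define, for a smooth function h on (0, ε₀), the operator (ℒh)(r) = μ r² h(r) − (1 − λr²/2)² · (r d/dr)² h(r) + 2(k+1)(1 − λ²r⁴/4) · (r d/dr) h(r), where (r d/dr) h(r) = r h'(r). Then there exist unique real numbers a₁, …, a_k and c such that the function h(r) = 1 + Σ_{l=1}^{k} a_l r^{2l} + c · r^{2k+2} log r satisfies (ℒh)(r) = O(r^{2k+3} log r) as r → 0⁺. -/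
/-!
In the variable `t = r²` the operator `ℒ` has polynomial coefficients and `r d/dr` becomes
`2 t d/dt`, so `ℒ` has a regular singular point at `0`. It sends `t ^ j` to `I(2j) t ^ j` plus
higher powers, with indicial polynomial `I(s) = s (2k + 2 - s)`. The resonance `I(2k + 2) = 0`
blocks a term `t ^ (k + 1)`; the logarithm compensates, because `ℒ (t ^ (k + 1) log r)` has the
nonzero leading term `(dI/ds)(2k + 2) t ^ (k + 1)` and its logarithmic part is of higher order. The
asymptotic condition is therefore a square linear system for `(a, c)` which is triangular with
nonzero diagonal: it has trivial kernel, hence exactly one solution. Only the values at `t = 0`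
of the coefficients matter.
-/

open Real Filter Asymptotics

/-- The operator `r d/dr`. -/
noncomputable def rDeriv (h : ℝ → ℝ) : ℝ → ℝ := fun r => r * deriv h r

/-- The scalar reduction of the Jacobi operator `J⁺` along an eigendirection with
eigenvalue `μ`:
`(ℒh)(r) = μ r² h(r) − (1 − λr²/2)² (r d/dr)² h(r) + 2(k+1)(1 − λ²r⁴/4)(r d/dr) h(r)`. -/
noncomputable def scalarJacobiOp (k : ℕ) (μ lam : ℝ) (h : ℝ → ℝ) : ℝ → ℝ := fun r =>
  μ * r ^ 2 * h r - (1 - lam * r ^ 2 / 2) ^ 2 * rDeriv (rDeriv h) r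
    + 2 * ((k : ℝ) + 1) * (1 - lam ^ 2 * r ^ 4 / 4) * rDeriv h r

/-- The ansatz `h(r) = 1 + Σ_{l=1}^{k} a_l r^{2l} + c r^{2k+2} log r`. -/
noncomputable def ansatz (k : ℕ) (a : Fin k → ℝ) (c : ℝ) : ℝ → ℝ := fun r =>
  1 + ∑ l : Fin k, a l * r ^ (2 * ((l : ℕ) + 1)) + c * r ^ (2 * k + 2) * Real.log r

section

open Polynomial Topology

/-- The function `r ↦ p(r²) + q(r²) log r`. The span of the functions `r ^ (2 * j)` and
`r ^ (2 * j) * log r` is stable under `r d/dr`, so the operators here act on pairs `(p, q)`. -/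
noncomputable def logPoly (p q : ℝ[X]) : ℝ → ℝ := fun r =>
  p.eval (r ^ 2) + q.eval (r ^ 2) * Real.log r

/-- The second-order operator `h ↦ c₀(r²) h + c₁(r²) (r d/dr) h + c₂(r²) (r d/dr)² h`, with
a regular singular point at `0` when `c₂(0) ≠ 0`. -/
noncomputable def fuchsianOp (c₀ c₁ c₂ : ℝ[X]) (h : ℝ → ℝ) : ℝ → ℝ := fun r =>
  c₀.eval (r ^ 2) * h r + c₁.eval (r ^ 2) * rDeriv h r + c₂.eval (r ^ 2) * rDeriv (rDeriv h) r

/-- The operator `2 t d/dt` on polynomials in `t`, which is `r d/dr` for `t = r²`. -/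
noncomputable def eulerPoly : ℝ[X] →ₗ[ℝ] ℝ[X] := LinearMap.mulLeft ℝ (2 * X) ∘ₗ derivative

/-- The action of `fuchsianOp` on polynomials in `t = r²`. -/
noncomputable def fuchsianPoly (c₀ c₁ c₂ : ℝ[X]) : ℝ[X] →ₗ[ℝ] ℝ[X] :=
  LinearMap.mulLeft ℝ c₀ + LinearMap.mulLeft ℝ c₁ ∘ₗ eulerPoly +
    LinearMap.mulLeft ℝ c₂ ∘ₗ eulerPoly ∘ₗ eulerPoly

/-- The logarithm-free part of the action of `fuchsianOp` on `q(r²) log r`: the derivative of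
`c₀ + c₁ θ + c₂ θ²` with respect to `θ`, evaluated at `θ = 2 t d/dt`. -/
noncomputable def fuchsianPolyLog (c₁ c₂ : ℝ[X]) : ℝ[X] →ₗ[ℝ] ℝ[X] :=
  LinearMap.mulLeft ℝ c₁ + LinearMap.mulLeft ℝ (2 * c₂) ∘ₗ eulerPoly

/-- The polynomial `Σ_{l=1}^{k} a_l t ^ l`, with `a_l` stored at index `l - 1`. -/
noncomputable def ansatzPoly (k : ℕ) : (Fin k → ℝ) →ₗ[ℝ] ℝ[X] :=
  ∑ l : Fin k, monomial ((l : ℕ) + 1) ∘ₗ LinearMap.proj l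

lemma rDeriv_congr {f g : ℝ → ℝ} {s : Set ℝ} (hs : IsOpen s) (hfg : Set.EqOn f g s) :
    Set.EqOn (rDeriv f) (rDeriv g) s := fun r hr => by
  simp only [rDeriv, (hfg.eventuallyEq_of_mem (hs.mem_nhds hr)).deriv_eq]

lemma rDeriv_logPoly (p q : ℝ[X]) :
    Set.EqOn (rDeriv (logPoly p q)) (logPoly (eulerPoly p + q) (eulerPoly q)) {0}ᶜ := by
  intro r (hr : r ≠ 0)
  have hasDerivAt_eval_sq (f : ℝ[X]) :
      HasDerivAt (fun x => f.eval (x ^ 2)) (f.derivative.eval (r ^ 2) * (2 * r)) r := by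
    simpa [Function.comp_def] using (f.hasDerivAt (r ^ 2)).comp r (hasDerivAt_pow 2 r)
  have hderiv : deriv (logPoly p q) r = _ :=
    ((hasDerivAt_eval_sq p).add ((hasDerivAt_eval_sq q).mul (Real.hasDerivAt_log hr))).deriv
  simp only [rDeriv, hderiv, logPoly, eulerPoly, LinearMap.comp_apply, LinearMap.mulLeft_apply,
    eval_add, eval_mul, eval_ofNat, eval_X]
  field_simp
  ring

lemma rDeriv_rDeriv_logPoly (p q : ℝ[X]) :
    Set.EqOn (rDeriv (rDeriv (logPoly p q)))
      (logPoly (eulerPoly (eulerPoly p + q) + eulerPoly q) (eulerPoly (eulerPoly q))) {0}ᶜ :=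
  (rDeriv_congr isOpen_compl_singleton (rDeriv_logPoly p q)).trans (rDeriv_logPoly _ _)

lemma fuchsianOp_logPoly (c₀ c₁ c₂ p q : ℝ[X]) :
    Set.EqOn (fuchsianOp c₀ c₁ c₂ (logPoly p q))
      (logPoly (fuchsianPoly c₀ c₁ c₂ p + fuchsianPolyLog c₁ c₂ q) (fuchsianPoly c₀ c₁ c₂ q))
      {0}ᶜ := by
  intro r hr
  simp only [fuchsianOp, rDeriv_rDeriv_logPoly p q hr, rDeriv_logPoly p q hr, logPoly,
    fuchsianPoly, fuchsianPolyLog, map_add, LinearMap.add_apply, LinearMap.comp_apply,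
    LinearMap.mulLeft_apply, eval_add, eval_mul, eval_ofNat]
  ring

lemma ansatzPoly_apply (k : ℕ) (a : Fin k → ℝ) :
    ansatzPoly k a = ∑ l : Fin k, monomial ((l : ℕ) + 1) (a l) := by
  simp only [ansatzPoly, LinearMap.sum_apply, LinearMap.comp_apply, LinearMap.proj_apply]

lemma ansatz_eq_logPoly (k : ℕ) (a : Fin k → ℝ) (c : ℝ) :
    ansatz k a c = logPoly (1 + ansatzPoly k a) (monomial (k + 1) c) := by
  ext r
  simp only [ansatz, logPoly, ansatzPoly_apply, eval_add, eval_one, eval_finsetSum,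
    eval_monomial, ← pow_mul, mul_add_one]

lemma coeff_ansatzPoly_succ (k : ℕ) (a : Fin k → ℝ) (l : Fin k) :
    (ansatzPoly k a).coeff (l + 1) = a l := by
  simp [ansatzPoly_apply, coeff_monomial, Fin.val_inj]

lemma X_dvd_ansatzPoly (k : ℕ) (a : Fin k → ℝ) : X ∣ ansatzPoly k a := by
  simp [X_dvd_iff, ansatzPoly_apply, coeff_monomial]

lemma degree_ansatzPoly_lt (k : ℕ) (a : Fin k → ℝ) :
    (ansatzPoly k a).degree < ((k + 1 : ℕ) : WithBot ℕ) := by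
  rw [ansatzPoly_apply, ← mem_degreeLT]
  refine Submodule.sum_mem _ fun l _ => mem_degreeLT.2 ?_
  exact (degree_monomial_le _ _).trans_lt (by exact_mod_cast Nat.succ_lt_succ l.isLt)

lemma X_pow_dvd_monomial {R : Type*} [Semiring R] (n : ℕ) (c : R) : X ^ n ∣ monomial n c :=
  ⟨C c, (X_pow_mul_C c n).trans C_mul_X_pow_eq_monomial |>.symm⟩

lemma coeff_mul_of_X_pow_dvd {R : Type*} [Semiring R] {j : ℕ} {p : R[X]} (hp : X ^ j ∣ p)
    (f : R[X]) : (f * p).coeff j = f.coeff 0 * p.coeff j := by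
  obtain ⟨s, rfl⟩ := hp
  simp only [X_pow_mul, ← mul_assoc, coeff_mul_X_pow', le_refl, if_true, Nat.sub_self,
    mul_coeff_zero]

lemma X_pow_succ_dvd_iff {R : Type*} [Semiring R] {n : ℕ} {p : R[X]} :
    X ^ (n + 1) ∣ p ↔ X ^ n ∣ p ∧ p.coeff n = 0 := by
  simp only [X_pow_dvd_iff, Nat.lt_succ_iff_lt_or_eq, or_imp, forall_and, forall_eq]

lemma coeff_eulerPoly (p : ℝ[X]) (j : ℕ) : (eulerPoly p).coeff j = 2 * j * p.coeff j := by
  cases j with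
  | zero => simp [eulerPoly]
  | succ j =>
    simp only [eulerPoly, LinearMap.comp_apply, LinearMap.mulLeft_apply, mul_assoc,
      coeff_ofNat_mul, coeff_X_mul, coeff_derivative]
    push_cast
    ring

lemma X_pow_dvd_eulerPoly {j : ℕ} {p : ℝ[X]} (hp : X ^ j ∣ p) : X ^ j ∣ eulerPoly p := by
  rw [X_pow_dvd_iff] at hp ⊢
  intro i hi
  rw [coeff_eulerPoly, hp i hi, mul_zero]

lemma X_pow_dvd_fuchsianPoly (c₀ c₁ c₂ : ℝ[X]) {j : ℕ} {p : ℝ[X]} (hp : X ^ j ∣ p) :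
    X ^ j ∣ fuchsianPoly c₀ c₁ c₂ p :=
  have hθp := X_pow_dvd_eulerPoly hp
  ((hp.mul_left c₀).add (hθp.mul_left c₁)).add ((X_pow_dvd_eulerPoly hθp).mul_left c₂)

lemma X_pow_dvd_fuchsianPolyLog (c₁ c₂ : ℝ[X]) {j : ℕ} {p : ℝ[X]} (hp : X ^ j ∣ p) :
    X ^ j ∣ fuchsianPolyLog c₁ c₂ p :=
  (hp.mul_left c₁).add ((X_pow_dvd_eulerPoly hp).mul_left (2 * c₂))

lemma coeff_fuchsianPoly (c₀ c₁ c₂ : ℝ[X]) {j : ℕ} {p : ℝ[X]} (hp : X ^ j ∣ p) :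
    (fuchsianPoly c₀ c₁ c₂ p).coeff j =
      (c₀.coeff 0 + c₁.coeff 0 * (2 * j) + c₂.coeff 0 * (2 * j) ^ 2) * p.coeff j := by
  have hθp := X_pow_dvd_eulerPoly hp
  simp only [fuchsianPoly, LinearMap.add_apply, LinearMap.comp_apply, LinearMap.mulLeft_apply,
    coeff_add, coeff_mul_of_X_pow_dvd hp, coeff_mul_of_X_pow_dvd hθp,
    coeff_mul_of_X_pow_dvd (X_pow_dvd_eulerPoly hθp), coeff_eulerPoly]
  ring

lemma coeff_fuchsianPolyLog (c₁ c₂ : ℝ[X]) {j : ℕ} {p : ℝ[X]} (hp : X ^ j ∣ p) :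
    (fuchsianPolyLog c₁ c₂ p).coeff j =
      (c₁.coeff 0 + 2 * c₂.coeff 0 * (2 * j)) * p.coeff j := by
  simp only [fuchsianPolyLog, LinearMap.add_apply, LinearMap.comp_apply, LinearMap.mulLeft_apply,
    coeff_add, coeff_mul_of_X_pow_dvd hp, coeff_mul_of_X_pow_dvd (X_pow_dvd_eulerPoly hp),
    coeff_eulerPoly, coeff_ofNat_mul]
  ring

section PolynomialAsymptotics

variable {α 𝕜 : Type*} [NontriviallyNormedField 𝕜] {l : Filter α} {u : α → 𝕜} {n : ℕ} {p : 𝕜[X]}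

lemma isBigO_eval_of_X_pow_dvd (hu : Tendsto u l (𝓝 0)) (hp : X ^ n ∣ p) :
    (fun x => p.eval (u x)) =O[l] fun x => u x ^ n := by
  obtain ⟨s, rfl⟩ := hp
  have hs : (fun x => s.eval (u x)) =O[l] fun _ => (1 : 𝕜) :=
    ((s.continuous.tendsto 0).comp hu).isBigO_one 𝕜
  simpa using (isBigO_refl (fun x => u x ^ n) l).mul hs

lemma X_pow_succ_dvd_of_isLittleO_eval [l.NeBot] (hu : Tendsto u l (𝓝[≠] 0))
    (hp : (fun x => p.eval (u x)) =o[l] fun x => u x ^ n) : X ^ (n + 1) ∣ p := by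
  have hu₀ : Tendsto u l (𝓝 0) := tendsto_nhds_of_tendsto_nhdsWithin hu
  have hu_ne : ∀ᶠ x in l, u x ≠ 0 := hu.eventually self_mem_nhdsWithin
  suffices ∀ m ≤ n + 1, X ^ m ∣ p from this _ le_rfl
  intro m
  induction m with
  | zero => simp
  | succ m ih =>
    intro hm
    obtain ⟨s, rfl⟩ := ih (by lia)
    have hpow : (fun x => u x ^ n) =O[l] fun x => u x ^ m := by
      simpa using isBigO_eval_of_X_pow_dvd hu₀ (pow_dvd_pow X (show m ≤ n by lia))
    have hlim : Tendsto (fun x => s.eval (u x)) l (𝓝 0) := by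
      refine (hp.trans_isBigO hpow).tendsto_div_nhds_zero.congr' ?_
      filter_upwards [hu_ne] with x hx
      rw [eval_mul, eval_pow, eval_X, mul_div_cancel_left₀ _ (pow_ne_zero m hx)]
    rw [pow_succ]
    refine mul_dvd_mul_left _ (X_dvd_iff.2 ?_)
    rw [coeff_zero_eq_eval_zero]
    exact tendsto_nhds_unique ((s.continuous.tendsto 0).comp hu₀) hlim

end PolynomialAsymptotics

lemma one_isBigO_log_nhdsGT_zero : (fun _ => (1 : ℝ)) =O[𝓝[>] 0] Real.log :=
  (isLittleO_const_left.2 <| Or.inr <|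
    tendsto_abs_atBot_atTop.comp Real.tendsto_log_nhdsGT_zero).isBigO

lemma mul_log_isLittleO_one_nhdsGT_zero :
    (fun r => r * Real.log r) =o[𝓝[>] 0] fun _ => (1 : ℝ) := by
  rw [isLittleO_one_iff]
  simpa using (Real.continuous_mul_log.tendsto 0).mono_left nhdsWithin_le_nhds

lemma isBigO_logPoly_iff {n : ℕ} {p q : ℝ[X]} (hq : X ^ (n + 1) ∣ q) :
    logPoly p q =O[𝓝[>] 0] (fun r => r ^ (2 * n + 1) * Real.log r) ↔ X ^ (n + 1) ∣ p := by
  have hsq : Tendsto (fun r : ℝ => r ^ 2) (𝓝[>] 0) (𝓝[≠] 0) := by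
    refine tendsto_nhdsWithin_iff.2 ⟨?_, ?_⟩
    · simpa using ((continuous_pow 2).tendsto (0 : ℝ)).mono_left nhdsWithin_le_nhds
    · filter_upwards [self_mem_nhdsWithin] with r (hr : 0 < r) using pow_ne_zero 2 hr.ne'
  have eval_isBigO {f : ℝ[X]} (hf : X ^ (n + 1) ∣ f) :
      (fun r => f.eval (r ^ 2)) =O[𝓝[>] (0 : ℝ)] fun r => r ^ (2 * n + 1) := by
    have hpow := ((isLittleO_pow_pow (𝕜 := ℝ) (show 2 * n + 1 < 2 * (n + 1) by lia)).isBigO).mono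
      (nhdsWithin_le_nhds (s := Set.Ioi 0))
    refine (isBigO_eval_of_X_pow_dvd (tendsto_nhds_of_tendsto_nhdsWithin hsq) hf).trans ?_
    simpa only [← pow_mul] using hpow
  have hlog : (fun r => q.eval (r ^ 2) * Real.log r) =O[𝓝[>] 0]
      fun r => r ^ (2 * n + 1) * Real.log r := (eval_isBigO hq).mul (isBigO_refl _ _)
  have hlittle : (fun r => r ^ (2 * n + 1) * Real.log r) =o[𝓝[>] 0] fun r => (r ^ 2) ^ n := by
    simpa only [pow_succ _ (2 * n), ← pow_mul, mul_assoc, mul_one] using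
      (isBigO_refl (fun r : ℝ => r ^ (2 * n)) _).mul_isLittleO mul_log_isLittleO_one_nhdsGT_zero
  refine (hlog.add_iff_left (f₁ := fun r => p.eval (r ^ 2))).trans ⟨fun hp => ?_, fun hp => ?_⟩
  · exact X_pow_succ_dvd_of_isLittleO_eval hsq (hp.trans_isLittleO hlittle)
  · simpa using (eval_isBigO hp).mul one_isBigO_log_nhdsGT_zero

section IndicialRoots

variable {k : ℕ} {c₀ c₁ c₂ : ℝ[X]}

/-- The part linear in `(a, c)` of the logarithm-free part of
`fuchsianOp c₀ c₁ c₂ (ansatz k a c)`. -/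
noncomputable def ansatzResidual (k : ℕ) (c₀ c₁ c₂ : ℝ[X]) : (Fin k → ℝ) × ℝ →ₗ[ℝ] ℝ[X] :=
  (fuchsianPoly c₀ c₁ c₂ ∘ₗ ansatzPoly k).coprod (fuchsianPolyLog c₁ c₂ ∘ₗ monomial (k + 1))

lemma X_dvd_ansatzResidual (x : (Fin k → ℝ) × ℝ) : X ∣ ansatzResidual k c₀ c₁ c₂ x := by
  have hlog : X ∣ monomial (k + 1) x.2 :=
    (dvd_pow_self X k.succ_ne_zero).trans (X_pow_dvd_monomial _ _)
  rw [← pow_one X] at hlog ⊢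
  exact (X_pow_dvd_fuchsianPoly _ _ _ (by simpa using X_dvd_ansatzPoly k x.1)).add
    (X_pow_dvd_fuchsianPolyLog _ _ hlog)

lemma fuchsianOp_ansatz_isBigO_iff (h₀ : c₀.coeff 0 = 0)
    (h₁ : c₁.coeff 0 = -(2 * k + 2) * c₂.coeff 0) (a : Fin k → ℝ) (c : ℝ) :
    fuchsianOp c₀ c₁ c₂ (ansatz k a c) =O[𝓝[>] 0] (fun r => r ^ (2 * k + 3) * Real.log r) ↔
      X ^ (k + 2) ∣ fuchsianPoly c₀ c₁ c₂ 1 + ansatzResidual k c₀ c₁ c₂ (a, c) := by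
  have hq : X ^ (k + 2) ∣ fuchsianPoly c₀ c₁ c₂ (monomial (k + 1) c) := by
    have hmono := X_pow_dvd_monomial (k + 1) c
    refine X_pow_succ_dvd_iff.2 ⟨X_pow_dvd_fuchsianPoly _ _ _ hmono, ?_⟩
    rw [coeff_fuchsianPoly _ _ _ hmono, h₀]
    push_cast
    linear_combination (2 * (k : ℝ) + 2) * (monomial (k + 1) c).coeff (k + 1) * h₁
  have hlogPoly := (fuchsianOp_logPoly c₀ c₁ c₂ (1 + ansatzPoly k a)
    (monomial (k + 1) c)).eventuallyEq_of_mem (nhdsGT_le_nhdsNE 0 self_mem_nhdsWithin)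
  rw [ansatz_eq_logPoly, isBigO_congr hlogPoly EventuallyEq.rfl, map_add, add_assoc]
  exact isBigO_logPoly_iff hq

lemma X_pow_dvd_of_X_pow_dvd_fuchsianPoly (h₀ : c₀.coeff 0 = 0)
    (h₁ : c₁.coeff 0 = -(2 * k + 2) * c₂.coeff 0) (h₂ : c₂.coeff 0 ≠ 0) {p : ℝ[X]}
    (hX : X ∣ p) (hp : X ^ (k + 1) ∣ fuchsianPoly c₀ c₁ c₂ p) : X ^ (k + 1) ∣ p := by
  suffices ∀ j ≤ k, X ^ (j + 1) ∣ p from this k le_rfl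
  intro j
  induction j with
  | zero => simpa using hX
  | succ j ih =>
    intro hj
    have hdvd := ih (by lia)
    have hcoeff := X_pow_dvd_iff.1 hp (j + 1) (by lia)
    have hindicial : c₂.coeff 0 * (2 * (j + 1) * (2 * ((j : ℝ) - k))) ≠ 0 := by
      have hjk : (j : ℝ) - k ≠ 0 := sub_ne_zero.2 (by exact_mod_cast (show j ≠ k by lia))
      have hj₀ : (j : ℝ) + 1 ≠ 0 := by positivity
      simp [h₂, hjk, hj₀]
    refine X_pow_succ_dvd_iff.2 ⟨hdvd, (mul_eq_zero.1 ?_).resolve_left hindicial⟩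
    rw [coeff_fuchsianPoly _ _ _ hdvd, h₀] at hcoeff
    push_cast at hcoeff
    linear_combination hcoeff - 2 * ((j : ℝ) + 1) * p.coeff (j + 1) * h₁

lemma eq_zero_of_X_pow_dvd_ansatzResidual (h₀ : c₀.coeff 0 = 0)
    (h₁ : c₁.coeff 0 = -(2 * k + 2) * c₂.coeff 0) (h₂ : c₂.coeff 0 ≠ 0)
    {x : (Fin k → ℝ) × ℝ} (hx : X ^ (k + 2) ∣ ansatzResidual k c₀ c₁ c₂ x) : x = 0 := by
  obtain ⟨a, c⟩ := x
  have hmono := X_pow_dvd_monomial (k + 1) c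
  replace hx : X ^ (k + 2) ∣ fuchsianPoly c₀ c₁ c₂ (ansatzPoly k a) +
    fuchsianPolyLog c₁ c₂ (monomial (k + 1) c) := hx
  obtain ⟨hdvd, hcoeff⟩ := X_pow_succ_dvd_iff.1 hx
  have hp : ansatzPoly k a = 0 := by
    have hdeg := (degree_ansatzPoly_lt k a).trans_eq (degree_X_pow (R := ℝ) (k + 1)).symm
    refine eq_zero_of_dvd_of_degree_lt ?_ hdeg
    exact X_pow_dvd_of_X_pow_dvd_fuchsianPoly h₀ h₁ h₂ (X_dvd_ansatzPoly k a)
      ((dvd_add_left (X_pow_dvd_fuchsianPolyLog c₁ c₂ hmono)).1 hdvd)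
  have ha : a = 0 := by
    ext l
    rw [← coeff_ansatzPoly_succ k a l, hp, coeff_zero, Pi.zero_apply]
  have hc : c = 0 := by
    rw [hp, map_zero, zero_add, coeff_fuchsianPolyLog _ _ hmono, coeff_monomial_same] at hcoeff
    refine (mul_eq_zero.1 ?_).resolve_left (mul_ne_zero h₂ (show 2 * (k : ℝ) + 2 ≠ 0 by positivity))
    push_cast at hcoeff
    linear_combination hcoeff - c * h₁
  rw [ha, hc, Prod.mk_zero_zero]

/-- The coefficients of `t, …, t ^ n` of a polynomial. -/
noncomputable def higherCoeffs (n : ℕ) : ℝ[X] →ₗ[ℝ] Fin n → ℝ :=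
  LinearMap.pi fun i => lcoeff ℝ (i + 1)

lemma higherCoeffs_eq_zero_iff {n : ℕ} {p : ℝ[X]} (hp : p.coeff 0 = 0) :
    higherCoeffs n p = 0 ↔ X ^ (n + 1) ∣ p := by
  rw [X_pow_dvd_iff, ← Fin.forall_iff (p := fun i => p.coeff i = 0), Fin.forall_fin_succ,
    funext_iff]
  simp [higherCoeffs, hp]

-- The hypotheses say that `c₀(0) + c₁(0) s + c₂(0) s²` has the two roots `0` and `2k + 2`.
theorem exists_unique_asymptotic_solution_general (h₀ : c₀.coeff 0 = 0)
    (h₁ : c₁.coeff 0 = -(2 * k + 2) * c₂.coeff 0) (h₂ : c₂.coeff 0 ≠ 0) :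
    ∃! p : (Fin k → ℝ) × ℝ, fuchsianOp c₀ c₁ c₂ (ansatz k p.1 p.2) =O[𝓝[>] 0]
      fun r => r ^ (2 * k + 3) * Real.log r := by
  let L := higherCoeffs (k + 1) ∘ₗ ansatzResidual k c₀ c₁ c₂
  have residual_coeff_zero (x) : (ansatzResidual k c₀ c₁ c₂ x).coeff 0 = 0 :=
    X_dvd_iff.1 (X_dvd_ansatzResidual x)
  have one_coeff_zero : (fuchsianPoly c₀ c₁ c₂ 1).coeff 0 = 0 := by
    simp [coeff_fuchsianPoly (j := 0) _ _ _ (by simp), h₀]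
  have hinj : Function.Injective L := (injective_iff_map_eq_zero L).2 fun x hx =>
    eq_zero_of_X_pow_dvd_ansatzResidual h₀ h₁ h₂
      ((higherCoeffs_eq_zero_iff (residual_coeff_zero x)).1 hx)
  have hsurj : Function.Surjective L :=
    (LinearMap.injective_iff_surjective_of_finrank_eq_finrank (by simp)).1 hinj
  have hiff (x : (Fin k → ℝ) × ℝ) :
      fuchsianOp c₀ c₁ c₂ (ansatz k x.1 x.2) =O[𝓝[>] 0]
        (fun r => r ^ (2 * k + 3) * Real.log r) ↔
      L x = -higherCoeffs (k + 1) (fuchsianPoly c₀ c₁ c₂ 1) := by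
    rw [fuchsianOp_ansatz_isBigO_iff h₀ h₁, ← higherCoeffs_eq_zero_iff (by
      rw [coeff_add, one_coeff_zero, residual_coeff_zero, add_zero]), map_add]
    exact add_eq_zero_iff_neg_eq.trans eq_comm
  simpa only [hiff] using Function.Bijective.existsUnique ⟨hinj, hsurj⟩ _

end IndicialRoots

lemma scalarJacobiOp_eq_fuchsianOp (k : ℕ) (μ lam : ℝ) :
    scalarJacobiOp k μ lam = fuchsianOp (C μ * X)
      (C (2 * ((k : ℝ) + 1)) * (1 - C (lam ^ 2 / 4) * X ^ 2)) (-(1 - C (lam / 2) * X) ^ 2) := by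
  ext h r
  simp only [scalarJacobiOp, fuchsianOp, eval_mul, eval_sub, eval_neg, eval_pow, eval_C, eval_X,
    eval_one]
  ring

end

/-- There exist unique real numbers `a₁, …, a_k` and `c` such that
`h(r) = 1 + Σ_{l=1}^{k} a_l r^{2l} + c r^{2k+2} log r` satisfies
`(ℒh)(r) = O(r^{2k+3} log r)` as `r → 0⁺`. -/
theorem exists_unique_asymptotic_solution (k : ℕ) (hk : 1 ≤ k) (μ lam : ℝ) :
    ∃! p : (Fin k → ℝ) × ℝ,
      (scalarJacobiOp k μ lam (ansatz k p.1 p.2)) =O[nhdsWithin 0 (Set.Ioi 0)]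
        (fun r : ℝ => r ^ (2 * k + 3) * Real.log r) := by
  rw [scalarJacobiOp_eq_fuchsianOp]
  exact exists_unique_asymptotic_solution_general (by simp)
    (by simp [Polynomial.coeff_zero_eq_eval_zero, mul_add])
    (by simp [Polynomial.coeff_zero_eq_eval_zero])
end

section
/- Let k ≥ 1 be an integer and μ, λ real numbers, and let ℒ be the operator (ℒh)(r) = μ r² h(r) − (1 − λr²/2)² (r d/dr)² h(r) + 2(k+1)(1 − λ²r⁴/4)(r d/dr) h(r). If real numbers a₁, …, a_k and c are such that h(r) = 1 + Σ_{l=1}^{k} a_l r^{2l} + c r^{2k+2} log r satisfies (ℒh)(r) = O(r^{2k+3} log r) as r → 0⁺, then c = −2 c_{k+1} · Π_{l=1}^{k+1} [μ + 2λ(k+l)(k−l+1)], where c_{k+1} = (−1)^{k+1} / (2^{2k+2} k! (k+1)!). -/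
open Real Filter Asymptotics

/-!
In the variable `y = r²`, with `t = λ/2` and `D = y d/dy`, the operator `ℒ` becomes
`μ y − 4(1 − ty)² D² + 4(k+1)(1 − t²y²) D`, whose power series solutions satisfy a three-term
recursion. In terms of `Z = y / (1 − ty)²` it collapses to a two-term one:
`ℒ (Z ^ j) = (1 − ty)² (4 j (k + 1 − j) Z ^ j + (μ + 8 t j (2k + 1 − 2j)) Z ^ (j + 1))`.
The recursion determines the solution with constant term `1` up to degree `k`, and the factor
`k + 1 − j` vanishes at `j = k + 1`, so the coefficient of `y ^ (k + 1)` in `ℒ` of it is an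
explicit product. The term `c r^(2k+2) log r` has to cancel this obstruction: it contributes
`−2(k+1)c y ^ (k + 1)` without logarithm, and its logarithmic part is of higher order.
-/

section TwoTermRecursion

variable {R A : Type*} [CommRing R] [CommRing A] [Algebra R A]

theorem derivation_pow_of_eigen {D : Derivation R A A} {s z : A} (hz : D z = s * z) (j : ℕ) :
    D (z ^ j) = j * s * z ^ j := by
  induction j with
  | zero => simp
  | succ j ih => rw [pow_succ, D.leibniz, ih, hz]; push_cast; simp only [smul_eq_mul]; ring

/-- The operator `ℒ` in the variable `y = r²`, with `t = λ/2`: for the Euler derivation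
`D = y d/dy` one has `r d/dr = 2D`, so `ℒ` becomes
`μ y − 4(1 − ty)² D² + 4(k+1)(1 − t²y²) D`. It makes sense on any algebra with a derivation, and
is used on polynomials and on power series. -/
def reducedJacobiOp (D : Derivation R A A) (y : A) (k : ℕ) (μ t : R) : A →ₗ[R] A where
  toFun p := μ • (y * p) - 4 * (1 - t • y) ^ 2 * D (D p)
    + 4 * (k + 1) * (1 - (t • y) ^ 2) * D p
  map_add' p q := by simp only [map_add]; algebra
  map_smul' a p := by simp only [D.map_smul, RingHom.id_apply]; algebra

theorem reducedJacobiOp_apply (D : Derivation R A A) (y : A) (k : ℕ) (μ t : R) (p : A) :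
    reducedJacobiOp D y k μ t p = μ • (y * p) - 4 * (1 - t • y) ^ 2 * D (D p)
      + 4 * (k + 1) * (1 - (t • y) ^ 2) * D p := rfl

theorem reducedJacobiOp_eq_indicial_add (D : Derivation R A A) (y : A) (k : ℕ) (μ t : R) (p : A) :
    reducedJacobiOp D y k μ t p = (4 * (k + 1) : R) • D p - (4 : R) • D (D p)
      + y * (μ • p + ((8 * t) • 1 - (4 * t ^ 2) • y) * D (D p)
        - (4 * (k + 1) * t ^ 2) • y * D p) := by
  rw [reducedJacobiOp_apply]
  algebra

theorem map_reducedJacobiOp {B : Type*} [CommRing B] [Algebra R B] {D : Derivation R A A}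
    {E : Derivation R B B} (φ : A →ₐ[R] B) (hφ : ∀ p, φ (D p) = E (φ p)) (y : A) (k : ℕ)
    (μ t : R) (p : A) :
    φ (reducedJacobiOp D y k μ t p) = reducedJacobiOp E (φ y) k μ t (φ p) := by
  simp [reducedJacobiOp_apply, hφ, map_ofNat φ]

/-- The logarithm-free part of `ℒ (q log r)` in the variable `y = r²`, with `t = λ/2`. It comes
from `(r d/dr)(q log r) = 2 (D q) log r + q`. -/
def logDefect (D : Derivation R A A) (y : A) (k : ℕ) (t : R) (q : A) : A :=
  2 * (k + 1) * (1 - (t • y) ^ 2) * q - 4 * (1 - t • y) ^ 2 * D q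

theorem logDefect_smul_pow {D : Derivation R A A} {y : A} (hD : D y = y) (k : ℕ) (t c : R) :
    logDefect D y k t (c • y ^ (k + 1))
      = y ^ (k + 1) * ((2 * (k + 1) * c) • ((1 - t • y) * (3 * t • y - 1))) := by
  have hy := derivation_pow_of_eigen (hD.trans (one_mul y).symm) (k + 1)
  rw [logDefect, D.map_smul, hy]
  push_cast
  algebra

/-- The coefficient of `Z ^ (j + 1)` in the two-term expansion of `ℒ (Z ^ j)`. -/
def recursionFactor (k : ℕ) (μ t : R) (j : ℕ) : R :=
  μ + 8 * t * j * (2 * k + 1 - 2 * j)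

variable {D : Derivation R A A} {y u : A} {t : R}

theorem derivation_inv_one_sub (hD : D y = y) (hu : (1 - t • y) * u = 1) :
    D u = t • (y * u ^ 2) := by
  rw [D.leibniz_of_mul_eq_one (mul_comm u _ ▸ hu)]
  simp only [map_sub, D.map_smul, D.map_one_eq_zero, hD, smul_eq_mul]
  algebra

theorem derivation_uniformizer (hD : D y = y) (hu : (1 - t • y) * u = 1) :
    D (y * u ^ 2) = (1 + (2 * t) • (y * u)) * (y * u ^ 2) := by
  rw [pow_two, D.leibniz, D.leibniz, derivation_inv_one_sub hD hu, hD]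
  simp only [smul_eq_mul]
  algebra

theorem derivation_uniformizer_factor (hD : D y = y) (hu : (1 - t • y) * u = 1) :
    D (1 + (2 * t) • (y * u)) = (2 * t) • (y * u ^ 2) := by
  have hyu : D (y * u) = y * u ^ 2 := by
    rw [D.leibniz, derivation_inv_one_sub hD hu, hD]
    simp only [smul_eq_mul]
    linear_combination (norm := algebra) -(y * u) * hu
  rw [map_add, D.map_one_eq_zero, D.map_smul, hyu, zero_add]

theorem sq_uniformizer_factor (hu : (1 - t • y) * u = 1) :
    (1 + (2 * t) • (y * u)) ^ 2 = 1 + (4 * t) • (y * u ^ 2) := by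
  linear_combination (norm := algebra) -4 * t • (y * u) * hu

theorem one_sub_mul_uniformizer_factor (hu : (1 - t • y) * u = 1) :
    (1 - t • y) * (1 + (2 * t) • (y * u)) = 1 + t • y := by
  linear_combination (norm := algebra) 2 * t • y * hu

theorem derivation_derivation_uniformizer_pow (hD : D y = y) (hu : (1 - t • y) * u = 1)
    (j : ℕ) :
    D (D ((y * u ^ 2) ^ j)) =
      (j ^ 2 * (1 + (4 * t) • (y * u ^ 2)) + j * (2 * t) • (y * u ^ 2)) * (y * u ^ 2) ^ j := by
  have hZ := derivation_pow_of_eigen (derivation_uniformizer hD hu) j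
  rw [hZ, D.leibniz, D.leibniz, hZ, derivation_uniformizer_factor hD hu, D.map_natCast,
    ← sq_uniformizer_factor hu]
  simp only [smul_eq_mul]
  ring

theorem reducedJacobiOp_uniformizer_pow (hD : D y = y) (hu : (1 - t • y) * u = 1)
    (k : ℕ) (μ : R) (j : ℕ) :
    reducedJacobiOp D y k μ t ((y * u ^ 2) ^ j) = (1 - t • y) ^ 2 *
      ((4 * j * (k + 1 - j) : R) • (y * u ^ 2) ^ j
        + recursionFactor k μ t j • (y * u ^ 2) ^ (j + 1)) := by
  have hy : y = (1 - t • y) ^ 2 * (y * u ^ 2) := by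
    linear_combination (norm := algebra) -y * ((1 - t • y) * u + 1) * hu
  have hs : (1 - (t • y) ^ 2) * (1 + (2 * t) • (y * u))
      = (1 - t • y) ^ 2 * (1 + (4 * t) • (y * u ^ 2)) := by
    rw [← sq_uniformizer_factor hu]
    linear_combination (norm := algebra)
      -(1 - t • y) * (1 + (2 * t) • (y * u)) * one_sub_mul_uniformizer_factor hu
  rw [reducedJacobiOp_apply, derivation_derivation_uniformizer_pow hD hu,
    derivation_pow_of_eigen (derivation_uniformizer hD hu), recursionFactor, pow_succ _ j]
  linear_combination (norm := algebra)
    (y * u ^ 2) ^ j * μ • hy + 4 * (k + 1) * j * (y * u ^ 2) ^ j * hs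

end TwoTermRecursion

section FrobeniusCoefficients

variable {K A : Type*} [Field K] [CommRing A] [Algebra K A]

/-- The coefficient of `Z ^ m` in the formal solution of `ℒ q = 0`, `q(0) = 1`, obtained by
iterating the two-term recursion. It is meaningful for `m ≤ k`: the factor `j = k`, which enters
for `m = k + 1`, has denominator `0`. -/
def frobeniusCoeff (k : ℕ) (μ t : K) (m : ℕ) : K :=
  ∏ j ∈ Finset.range m, (-recursionFactor k μ t j / (4 * (j + 1) * (k - j)))

theorem recursionFactor_mul_frobeniusCoeff (k : ℕ) (μ t : K) :
    recursionFactor k μ t k * frobeniusCoeff k μ t k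
      = (-1) ^ k * (∏ j ∈ Finset.range (k + 1), recursionFactor k μ t j)
        / (4 ^ k * (k.factorial : K) ^ 2) := by
  have h_asc : ∏ j ∈ Finset.range k, ((j : K) + 1) = k.factorial := by
    rw [← Finset.prod_range_add_one_eq_factorial]; push_cast; rfl
  have h_desc : ∏ j ∈ Finset.range k, ((k : K) - j) = k.factorial := by
    rw [← Nat.descFactorial_self, Nat.descFactorial_eq_prod_range, Nat.cast_prod]
    exact Finset.prod_congr rfl fun j hj ↦ (Nat.cast_sub (Finset.mem_range.mp hj).le).symm
  rw [frobeniusCoeff, Finset.prod_div_distrib, Finset.prod_mul_distrib, Finset.prod_mul_distrib,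
    Finset.prod_neg, Finset.prod_const, Finset.card_range, h_asc, h_desc, Finset.prod_range_succ]
  ring

variable [CharZero K]

theorem frobeniusCoeff_succ {k m : ℕ} (hm : m < k) (μ t : K) :
    4 * ((m + 1 : ℕ) : K) * (k + 1 - (m + 1 : ℕ)) * frobeniusCoeff k μ t (m + 1)
      = -(recursionFactor k μ t m * frobeniusCoeff k μ t m) := by
  have hkm : (k : K) - m ≠ 0 := sub_ne_zero.mpr (Nat.cast_injective.ne hm.ne')
  have hm1 : (m : K) + 1 ≠ 0 := Nat.cast_add_one_ne_zero m
  rw [frobeniusCoeff, Finset.prod_range_succ, ← frobeniusCoeff]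
  push_cast
  field_simp
  ring

theorem reducedJacobiOp_frobenius_sum {D : Derivation K A A} {y u : A} {t : K} (hD : D y = y)
    (hu : (1 - t • y) * u = 1) (k : ℕ) (μ : K) {m : ℕ} (hm : m ≤ k) :
    reducedJacobiOp D y k μ t
        (∑ j ∈ Finset.range (m + 1), frobeniusCoeff k μ t j • (y * u ^ 2) ^ j)
      = (1 - t • y) ^ 2 *
        (recursionFactor k μ t m * frobeniusCoeff k μ t m) • (y * u ^ 2) ^ (m + 1) := by
  induction m with
  | zero =>
    have h := reducedJacobiOp_uniformizer_pow hD hu k μ 0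
    simpa [frobeniusCoeff] using h
  | succ m ih =>
    have hb := frobeniusCoeff_succ hm μ t
    rw [Finset.sum_range_succ, map_add, ih (Nat.le_of_succ_le hm), map_smul,
      reducedJacobiOp_uniformizer_pow hD hu]
    linear_combination (norm := algebra) (1 - t • y) ^ 2 * (hb • (y * u ^ 2) ^ (m + 1))

end FrobeniusCoefficients

section PowerSeries

open PowerSeries

variable {R : Type*} [CommRing R]

/-- The Euler derivation `X d/dX` on power series. -/
noncomputable def seriesEuler (R : Type*) [CommRing R] : Derivation R R⟦X⟧ R⟦X⟧ :=
  (X : R⟦X⟧) • derivative R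

theorem coeff_seriesEuler (p : R⟦X⟧) (n : ℕ) : coeff n (seriesEuler R p) = n * coeff n p := by
  rw [seriesEuler, Derivation.smul_apply, smul_eq_mul]
  cases n with
  | zero => simp
  | succ n => rw [coeff_succ_X_mul, coeff_derivative]; push_cast; ring

theorem seriesEuler_X : seriesEuler R X = X := by
  simp [seriesEuler]

theorem X_pow_dvd_seriesEuler {n : ℕ} {p : R⟦X⟧} (hp : X ^ n ∣ p) : X ^ n ∣ seriesEuler R p :=
  X_pow_dvd_iff.mpr fun m hm ↦ by
    rw [coeff_seriesEuler, X_pow_dvd_iff.mp hp m hm, mul_zero]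

theorem coeff_reducedJacobiOp_of_X_pow_dvd {n : ℕ} {p : R⟦X⟧} (hp : X ^ n ∣ p) (k : ℕ)
    (μ t : R) :
    coeff n (reducedJacobiOp (seriesEuler R) X k μ t p) = 4 * n * (k + 1 - n) * coeff n p := by
  have hDp := X_pow_dvd_seriesEuler hp
  have h_tail : X ^ (n + 1) ∣ X * (μ • p
      + ((8 * t) • 1 - (4 * t ^ 2) • X) * seriesEuler R (seriesEuler R p)
      - (4 * (k + 1) * t ^ 2) • X * seriesEuler R p) := by
    rw [pow_succ']
    exact mul_dvd_mul_left X <| dvd_sub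
      (dvd_add (dvd_smul_of_dvd μ hp) ((X_pow_dvd_seriesEuler hDp).mul_left _))
      (hDp.mul_left _)
  rw [reducedJacobiOp_eq_indicial_add, map_add, X_pow_dvd_iff.mp h_tail n n.lt_succ_self,
    map_sub, coeff_smul, coeff_smul, coeff_seriesEuler, coeff_seriesEuler, coeff_seriesEuler]
  ring

theorem X_pow_dvd_reducedJacobiOp {k : ℕ} {p : R⟦X⟧} (hp : X ^ (k + 1) ∣ p) (μ t : R) :
    X ^ (k + 2) ∣ reducedJacobiOp (seriesEuler R) X k μ t p := by
  refine X_pow_dvd_iff.mpr fun m hm ↦ ?_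
  rw [coeff_reducedJacobiOp_of_X_pow_dvd ((pow_dvd_pow X (Nat.le_of_lt_succ hm)).trans hp)]
  obtain rfl | hm' := (Nat.le_of_lt_succ hm).eq_or_lt
  · push_cast; ring
  · rw [X_pow_dvd_iff.mp hp m hm', mul_zero]

variable {K : Type*} [Field K]

/-- The truncated formal solution `∑ b_j Z ^ j`, `j ≤ k`, of `ℒ q = 0`, where
`Z = X / (1 - t X) ^ 2` and `b_j` are the Frobenius coefficients. -/
noncomputable def frobeniusSeries (k : ℕ) (μ t : K) : K⟦X⟧ :=
  ∑ j ∈ Finset.range (k + 1),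
    frobeniusCoeff k μ t j • (X * (1 - t • X : K⟦X⟧)⁻¹ ^ 2) ^ j

theorem constantCoeff_frobeniusSeries (k : ℕ) (μ t : K) :
    constantCoeff (frobeniusSeries k μ t) = 1 := by
  rw [frobeniusSeries, Finset.sum_range_succ']
  simp [frobeniusCoeff]

variable [CharZero K]

theorem reducedJacobiOp_frobeniusSeries (k : ℕ) (μ t : K) :
    reducedJacobiOp (seriesEuler K) X k μ t (frobeniusSeries k μ t)
      = X ^ (k + 1) * ((recursionFactor k μ t k * frobeniusCoeff k μ t k) •
        ((1 - t • X) ^ 2 * ((1 - t • X)⁻¹ ^ 2) ^ (k + 1))) := by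
  have hu : (1 - t • X : K⟦X⟧) * (1 - t • X)⁻¹ = 1 := PowerSeries.mul_inv_cancel _ (by simp)
  rw [frobeniusSeries, reducedJacobiOp_frobenius_sum seriesEuler_X hu k μ le_rfl, mul_pow]
  simp only [mul_smul_comm]
  rw [mul_left_comm]

theorem X_pow_dvd_of_coeff_reducedJacobiOp_eq_zero {k : ℕ} {μ t : K} {p : K⟦X⟧}
    (hp : constantCoeff p = 0)
    (h : ∀ n ≤ k, coeff n (reducedJacobiOp (seriesEuler K) X k μ t p) = 0) :
    X ^ (k + 1) ∣ p := by
  suffices ∀ n ≤ k, X ^ (n + 1) ∣ p from this k le_rfl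
  intro n hn
  induction n with
  | zero => rwa [zero_add, pow_one, X_dvd_iff]
  | succ n ih =>
    have hpn : X ^ (n + 1) ∣ p := ih (Nat.le_of_succ_le hn)
    have h_indicial : 4 * ((n + 1 : ℕ) : K) * (k + 1 - (n + 1 : ℕ)) ≠ 0 := by
      refine mul_ne_zero (mul_ne_zero (by norm_num) (Nat.cast_ne_zero.mpr n.succ_ne_zero)) ?_
      rw [sub_ne_zero]
      exact_mod_cast (Nat.lt_succ_of_le hn).ne'
    have h_coeff : coeff (n + 1) p = 0 := by
      have := h (n + 1) hn
      rw [coeff_reducedJacobiOp_of_X_pow_dvd hpn] at this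
      exact (mul_eq_zero.mp this).resolve_left h_indicial
    refine X_pow_dvd_iff.mpr fun m hm ↦ ?_
    obtain rfl | hm' := (Nat.le_of_lt_succ hm).eq_or_lt
    · exact h_coeff
    · exact X_pow_dvd_iff.mp hpn m hm'

theorem coeff_succ_reducedJacobiOp_of_coeff_eq_zero {k : ℕ} {μ t : K} {p : K⟦X⟧}
    (hp : constantCoeff p = 1)
    (h : ∀ n ≤ k, coeff n (reducedJacobiOp (seriesEuler K) X k μ t p) = 0) :
    coeff (k + 1) (reducedJacobiOp (seriesEuler K) X k μ t p)
      = recursionFactor k μ t k * frobeniusCoeff k μ t k := by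
  set L := reducedJacobiOp (seriesEuler K) X k μ t
  set q := frobeniusSeries k μ t
  have hLq : L q = _ := reducedJacobiOp_frobeniusSeries k μ t
  have h_diff : X ^ (k + 1) ∣ p - q := by
    refine X_pow_dvd_of_coeff_reducedJacobiOp_eq_zero (μ := μ) (t := t) ?_ fun n hn ↦ ?_
    · rw [map_sub, hp, constantCoeff_frobeniusSeries, sub_self]
    · rw [map_sub, map_sub, h n hn, hLq,
        X_pow_dvd_iff.mp (dvd_mul_right _ _) n (Nat.lt_succ_of_le hn), sub_zero]
  have h_top : coeff (k + 1) (L p) = coeff (k + 1) (L q) := by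
    rw [← sub_eq_zero, ← map_sub, ← map_sub]
    exact X_pow_dvd_iff.mp (X_pow_dvd_reducedJacobiOp h_diff μ t) (k + 1) (k + 1).lt_succ_self
  rw [h_top, hLq, coeff_X_pow_mul', if_pos le_rfl]
  simp

end PowerSeries

section Polynomial

open Polynomial Topology

variable {R : Type*} [CommRing R]

/-- The Euler derivation `X d/dX` on polynomials. -/
noncomputable def polynomialEuler (R : Type*) [CommRing R] : Derivation R R[X] R[X] :=
  (X : R[X]) • derivative'

theorem polynomialEuler_apply (p : R[X]) : polynomialEuler R p = X * derivative p := rfl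

theorem polynomialEuler_X : polynomialEuler R X = X := by
  simp [polynomialEuler_apply]

theorem coe_polynomialEuler (p : R[X]) :
    (polynomialEuler R p : PowerSeries R) = seriesEuler R p := by
  simp [polynomialEuler_apply, seriesEuler, PowerSeries.derivative_coe]

theorem coe_reducedJacobiOp (k : ℕ) (μ t : R) (p : R[X]) :
    (reducedJacobiOp (polynomialEuler R) X k μ t p : PowerSeries R)
      = reducedJacobiOp (seriesEuler R) PowerSeries.X k μ t p := by
  have h_coe : ∀ q : R[X], coeToPowerSeries.algHom R q = (q : PowerSeries R) := by simp
  have h := map_reducedJacobiOp (D := polynomialEuler R) (E := seriesEuler R)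
    (coeToPowerSeries.algHom R) (by simp only [h_coe, coe_polynomialEuler, implies_true])
    X k μ t p
  simpa only [h_coe, coe_X] using h

theorem coeff_polynomial_reducedJacobiOp (k : ℕ) (μ t : R) (p : R[X]) (n : ℕ) :
    (reducedJacobiOp (polynomialEuler R) X k μ t p).coeff n
      = PowerSeries.coeff n (reducedJacobiOp (seriesEuler R) PowerSeries.X k μ t p) := by
  rw [← coe_reducedJacobiOp, coeff_coe]

theorem X_pow_dvd_polynomial_reducedJacobiOp {k : ℕ} {q : R[X]} (hq : X ^ (k + 1) ∣ q)
    (μ t : R) : X ^ (k + 2) ∣ reducedJacobiOp (polynomialEuler R) X k μ t q := by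
  have hq' : (PowerSeries.X ^ (k + 1) : PowerSeries R) ∣ q :=
    PowerSeries.X_pow_dvd_iff.mpr fun n hn ↦ by rw [coeff_coe, X_pow_dvd_iff.mp hq n hn]
  refine X_pow_dvd_iff.mpr fun n hn ↦ ?_
  rw [coeff_polynomial_reducedJacobiOp]
  exact PowerSeries.X_pow_dvd_iff.mp (X_pow_dvd_reducedJacobiOp hq' μ t) n hn

theorem X_pow_succ_dvd_of_isLittleO {𝕜 : Type*} [NormedField 𝕜] {l : Filter 𝕜} [l.NeBot]
    (hl : l ≤ 𝓝[≠] 0) {p : 𝕜[X]} {n : ℕ}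
    (h : (fun x ↦ p.eval x) =o[l] fun x ↦ x ^ n) : X ^ (n + 1) ∣ p := by
  have hl0 : l ≤ 𝓝 0 := hl.trans nhdsWithin_le_nhds
  have hpn : X ^ n ∣ p := by
    cases n with
    | zero => exact one_dvd p
    | succ n =>
      exact X_pow_succ_dvd_of_isLittleO hl
        (h.trans ((isLittleO_pow_pow n.lt_succ_self).mono hl0))
  obtain ⟨q, rfl⟩ := hpn
  have h_quot : Tendsto (fun x ↦ q.eval x) l (𝓝 0) := by
    refine h.tendsto_div_nhds_zero.congr' ?_
    filter_upwards [hl self_mem_nhdsWithin] with x hx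
    rw [eval_mul, eval_pow, eval_X, mul_div_cancel_left₀ _ (pow_ne_zero n hx)]
  have hq : q.eval 0 = 0 := tendsto_nhds_unique ((q.continuous.tendsto 0).mono_left hl0) h_quot
  rw [pow_succ]
  exact mul_dvd_mul_left _ (X_dvd_iff.mpr ((coeff_zero_eq_eval_zero q).trans hq))

theorem X_pow_succ_dvd_of_eval_sq_isLittleO {p : ℝ[X]} {n : ℕ}
    (h : (fun r ↦ p.eval (r ^ 2)) =o[𝓝[>] 0] fun r : ℝ ↦ r ^ (2 * n)) :
    X ^ (n + 1) ∣ p := by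
  simp only [← expand_eval] at h
  have h_dvd := X_pow_succ_dvd_of_isLittleO (l := 𝓝[>] (0 : ℝ))
    (nhdsWithin_mono 0 fun r hr ↦ ne_of_gt hr) h
  refine X_pow_dvd_iff.mpr fun m hm ↦ ?_
  rw [← coeff_expand_mul two_pos]
  exact X_pow_dvd_iff.mp h_dvd (m * 2) (by lia)

end Polynomial

section LogarithmicExpansion

open Polynomial Topology

/-- The function `p(r²) + q(r²) log r`: an expansion in even powers of `r` with a
logarithmic part. -/
noncomputable def evalSqLog (p q : ℝ[X]) : ℝ → ℝ := fun r ↦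
  p.eval (r ^ 2) + q.eval (r ^ 2) * log r

theorem rDeriv_eqOn_Ioi {f g : ℝ → ℝ} (h : Set.EqOn f g (Set.Ioi 0)) :
    Set.EqOn (rDeriv f) (rDeriv g) (Set.Ioi 0) := fun r hr ↦ by
  rw [rDeriv, rDeriv, (h.eventuallyEq_of_mem (Ioi_mem_nhds hr)).deriv_eq]

theorem rDeriv_evalSqLog (p q : ℝ[X]) :
    Set.EqOn (rDeriv (evalSqLog p q))
      (evalSqLog (2 * polynomialEuler ℝ p + q) (2 * polynomialEuler ℝ q)) (Set.Ioi 0) := by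
  intro r hr
  have hr0 : r ≠ 0 := ne_of_gt hr
  have h_sq (s : ℝ[X]) :
      HasDerivAt (fun x ↦ s.eval (x ^ 2)) (s.derivative.eval (r ^ 2) * (2 * r)) r := by
    simpa [Function.comp_def] using (s.hasDerivAt (r ^ 2)).comp r (hasDerivAt_pow 2 r)
  have h_deriv : HasDerivAt (evalSqLog p q) _ r := (h_sq p).add ((h_sq q).mul (hasDerivAt_log hr0))
  rw [rDeriv, h_deriv.deriv]
  simp only [evalSqLog, polynomialEuler_apply, eval_add, eval_mul, eval_X, eval_ofNat]
  field_simp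
  ring

theorem scalarJacobiOp_evalSqLog (k : ℕ) (μ lam : ℝ) (p q : ℝ[X]) :
    Set.EqOn (scalarJacobiOp k μ lam (evalSqLog p q))
      (evalSqLog (reducedJacobiOp (polynomialEuler ℝ) X k μ (lam / 2) p
          + logDefect (polynomialEuler ℝ) X k (lam / 2) q)
        (reducedJacobiOp (polynomialEuler ℝ) X k μ (lam / 2) q)) (Set.Ioi 0) := by
  intro r hr
  have h_snd := (rDeriv_eqOn_Ioi (rDeriv_evalSqLog p q)).trans (rDeriv_evalSqLog _ _)
  have h_two (s : ℝ[X]) : polynomialEuler ℝ (2 * s) = 2 * polynomialEuler ℝ s := by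
    simp only [two_mul, map_add]
  rw [scalarJacobiOp, h_snd hr, rDeriv_evalSqLog p q hr]
  simp only [evalSqLog, reducedJacobiOp_apply, logDefect, map_add, h_two, eval_add, eval_sub,
    eval_mul, eval_pow, eval_smul, eval_X, eval_one, eval_ofNat, eval_natCast, smul_eq_mul]
  ring

theorem mul_isLittleO_of_tendsto_zero {α 𝕜 : Type*} [NormedField 𝕜] {l : Filter α} {f g : α → 𝕜}
    (hg : Tendsto g l (𝓝 0)) : (fun x ↦ f x * g x) =o[l] f := by
  simpa using (isBigO_refl f l).mul_isLittleO ((isLittleO_one_iff 𝕜).mpr hg)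

theorem pow_succ_mul_log_isLittleO (n : ℕ) :
    (fun r ↦ r ^ (n + 1) * log r) =o[𝓝 0] fun r ↦ r ^ n := by
  simpa only [pow_succ, mul_assoc] using
    mul_isLittleO_of_tendsto_zero (f := fun r ↦ r ^ n) (continuous_mul_log.tendsto' 0 0 (by simp))

theorem eval_sq_mul_log_isLittleO {q : ℝ[X]} {n : ℕ} (hq : X ^ (n + 1) ∣ q) :
    (fun r ↦ q.eval (r ^ 2) * log r) =o[𝓝 0] fun r ↦ r ^ (2 * n) := by
  obtain ⟨s, rfl⟩ := hq
  have hg : Continuous fun r : ℝ ↦ s.eval (r ^ 2) * r * (r * log r) := by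
    have := continuous_mul_log
    fun_prop
  refine (mul_isLittleO_of_tendsto_zero (f := fun r ↦ r ^ (2 * n))
    (hg.tendsto' 0 0 (by simp))).congr_left fun r ↦ ?_
  simp only [eval_mul, eval_pow, eval_X]
  ring

theorem log_coeff_of_scalarJacobiOp_isLittleO {k : ℕ} {μ lam c : ℝ} {p : ℝ[X]}
    (hp : p.coeff 0 = 1)
    (h : scalarJacobiOp k μ lam (evalSqLog p (c • X ^ (k + 1)))
      =o[𝓝[>] 0] fun r ↦ r ^ (2 * (k + 1))) :
    2 * (k + 1) * c = recursionFactor k μ (lam / 2) k * frobeniusCoeff k μ (lam / 2) k := by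
  set t := lam / 2
  set L := reducedJacobiOp (polynomialEuler ℝ) X k μ t
  set q : ℝ[X] := c • X ^ (k + 1)
  have h_log : X ^ (k + 2) ∣ L q :=
    X_pow_dvd_polynomial_reducedJacobiOp (dvd_smul_of_dvd c dvd_rfl) μ t
  have h_poly : X ^ (k + 2) ∣ L p + logDefect (polynomialEuler ℝ) X k t q := by
    refine X_pow_succ_dvd_of_eval_sq_isLittleO <|
      (h.sub ((eval_sq_mul_log_isLittleO h_log).mono nhdsWithin_le_nhds)).congr' ?_ .rfl
    filter_upwards [self_mem_nhdsWithin] with r hr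
    rw [scalarJacobiOp_evalSqLog k μ lam p q hr, evalSqLog, add_sub_cancel_right]
  have h_coeff : ∀ n < k + 2, PowerSeries.coeff n
      (reducedJacobiOp (seriesEuler ℝ) PowerSeries.X k μ t p)
      = -(logDefect (polynomialEuler ℝ) X k t q).coeff n := fun n hn ↦ by
    rw [← coeff_polynomial_reducedJacobiOp, eq_neg_iff_add_eq_zero, ← coeff_add]
    exact X_pow_dvd_iff.mp h_poly n hn
  have h_defect := logDefect_smul_pow (polynomialEuler_X (R := ℝ)) k t c
  rw [← coeff_succ_reducedJacobiOp_of_coeff_eq_zero (p := (p : PowerSeries ℝ))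
    (by simpa using hp) fun n hn ↦ ?_]
  · rw [h_coeff (k + 1) (by lia), h_defect, coeff_X_pow_mul', if_pos le_rfl]
    simp [coeff_zero_eq_eval_zero]
  · rw [h_coeff n (by lia), h_defect, coeff_X_pow_mul', if_neg (by lia), neg_zero]

theorem ansatz_eq_evalSqLog (k : ℕ) (a : Fin k → ℝ) (c : ℝ) :
    ansatz k a c = evalSqLog (1 + ∑ l : Fin k, a l • X ^ ((l : ℕ) + 1)) (c • X ^ (k + 1)) := by
  funext r
  simp [ansatz, evalSqLog, eval_finsetSum, ← pow_mul, mul_add]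

end LogarithmicExpansion

theorem prod_Icc_eq_prod_range_of_symm {R M : Type*} [CommRing R] [CommMonoid M] (F : R → M)
    (k : ℕ) :
    ∏ l ∈ Finset.Icc 1 (k + 1), F ((k + l) * (k - l + 1))
      = ∏ j ∈ Finset.range (k + 1), F (2 * j * (2 * k + 1 - 2 * j)) := by
  -- The factor depends only on `(k + l) (k + 1 - l)`, which is symmetric under `l ↦ 1 - l`; of
  -- `l` and `1 - l` exactly one has the form `k + 1 - 2 * j`.
  symm
  refine Finset.prod_bij (fun j _ ↦ if 2 * j ≤ k then k + 1 - 2 * j else 2 * j - k) ?_ ?_ ?_ ?_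
  · simp only [Finset.mem_range, Finset.mem_Icc]
    lia
  · simp only [Finset.mem_range]
    lia
  · intro l hl
    rw [Finset.mem_Icc] at hl
    obtain ⟨j, hj | hj⟩ := Nat.even_or_odd' (k + 1 - l)
    · exact ⟨j, Finset.mem_range.mpr (by lia), by grind⟩
    · exact ⟨k - j, Finset.mem_range.mpr (by lia), by grind⟩
  · intro j hj
    rw [Finset.mem_range] at hj
    split_ifs with h
    · rw [Nat.cast_sub (by lia)]; push_cast; ring_nf
    · rw [Nat.cast_sub (by lia)]; push_cast; ring_nf

/-- If `h(r) = 1 + Σ_{l=1}^{k} a_l r^{2l} + c r^{2k+2} log r` satisfies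
`(ℒh)(r) = O(r^{2k+3} log r)` as `r → 0⁺`, then
`c = −2 c_{k+1} Π_{l=1}^{k+1} [μ + 2λ(k+l)(k−l+1)]` with
`c_{k+1} = (−1)^{k+1} / (2^{2k+2} k! (k+1)!)`. -/
theorem log_coefficient_formula (k : ℕ) (hk : 1 ≤ k) (μ lam : ℝ)
    (a : Fin k → ℝ) (c : ℝ)
    (h : (scalarJacobiOp k μ lam (ansatz k a c)) =O[nhdsWithin 0 (Set.Ioi 0)]
      (fun r : ℝ => r ^ (2 * k + 3) * Real.log r)) :
    c = -2 * ((-1) ^ (k + 1) / (2 ^ (2 * k + 2) * (Nat.factorial k : ℝ)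
          * (Nat.factorial (k + 1) : ℝ)))
        * ∏ l ∈ Finset.Icc 1 (k + 1),
            (μ + 2 * lam * ((k : ℝ) + (l : ℝ)) * ((k : ℝ) - (l : ℝ) + 1)) := by
  have h_o := h.trans_isLittleO ((pow_succ_mul_log_isLittleO (2 * (k + 1))).mono nhdsWithin_le_nhds)
  rw [ansatz_eq_evalSqLog] at h_o
  have h_coeff := log_coeff_of_scalarJacobiOp_isLittleO (by simp [Polynomial.coeff_X_pow]) h_o
  have h_prod : ∏ l ∈ Finset.Icc 1 (k + 1),
      (μ + 2 * lam * ((k : ℝ) + (l : ℝ)) * ((k : ℝ) - (l : ℝ) + 1))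
      = ∏ j ∈ Finset.range (k + 1), recursionFactor k μ (lam / 2) j := by
    simp only [mul_assoc]
    rw [prod_Icc_eq_prod_range_of_symm fun x : ℝ ↦ μ + 2 * (lam * x)]
    exact Finset.prod_congr rfl fun j _ ↦ by rw [recursionFactor]; ring
  rw [recursionFactor_mul_frobeniusCoeff, ← h_prod] at h_coeff
  have h_two_pow : (2 : ℝ) ^ (2 * k + 2) = 4 * 4 ^ k := by
    rw [pow_add, pow_mul]; norm_num; ring
  rw [eq_div_of_mul_eq (by positivity) ((mul_comm c _).trans h_coeff), h_two_pow,
    Nat.factorial_succ]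
  push_cast
  field_simp
  ring
end

section
/- Let k ≥ 1 and j ≥ 0 be integers, and define P(j) = Π_{l=1}^{k+1} [ j(2k + j − 1) + (k + l − 1)(k − l) ]. Then P(j) ≥ 0 for all j ≥ 0; moreover P(j) = 0 if and only if j = 0 or j = 1, and P(j) > 0 for all j ≥ 2. -/
/-!
With `x = j + k`, the `l`-th factor of `P(j)` splits as `(x - l) * (x + l - 1)`. As `l` runs over
`1, …, k + 1`, these linear factors are the `2k + 2` consecutive integers from `j - 1` to `j + 2k`,
so `P(j)` is the descending factorial `(j + 2k)(j + 2k - 1) ⋯ (j - 1)`, which vanishes exactly when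
it has more factors than its base `j + 2k`, that is, when `j < 2`.
-/

theorem mul_add_mul_eq_sub_mul_add_sub_one {R : Type*} [CommRing R] (a b c : R) :
    a * (2 * b + a - 1) + (b + c - 1) * (b - c) = (a + b - c) * (a + b + c - 1) := by
  ring

theorem descPochhammer_add_two_eval {R : Type*} [CommRing R] (n : ℕ) (x : R) :
    (descPochhammer R (n + 2)).eval x =
      x * (descPochhammer R n).eval (x - 1) * (x - (n + 1)) := by
  have succ_left_eval : (descPochhammer R (n + 1)).eval x =
      x * (descPochhammer R n).eval (x - 1) := by
    simp [descPochhammer_succ_left, Polynomial.eval_comp]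
  rw [descPochhammer_succ_eval, succ_left_eval, Nat.cast_succ]

theorem prod_Icc_sub_mul_add_sub_one {R : Type*} [CommRing R] (x : R) (n : ℕ) :
    ∏ l ∈ Finset.Icc 1 n, (x - l) * (x + l - 1) =
      (descPochhammer R (2 * n)).eval (x + n - 1) := by
  induction n with
  | zero => simp
  | succ n ih =>
    have top_eq : x + (n + 1 : ℕ) - 1 = x + n := by
      push_cast
      ring
    rw [Finset.prod_Icc_succ_top (Nat.le_add_left 1 n), ih, Nat.mul_succ,
      descPochhammer_add_two_eval, top_eq]
    push_cast
    ring

theorem prod_Icc_mul_add_mul_eq_descFactorial {R : Type*} [CommRing R] (j k n : ℕ) :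
    ∏ l ∈ Finset.Icc 1 (n + 1),
        ((j : R) * (2 * (k : R) + (j : R) - 1) + ((k : R) + (l : R) - 1) * ((k : R) - (l : R))) =
      (j + k + n).descFactorial (2 * (n + 1)) := by
  have top_eq : (j : R) + k + (n + 1 : ℕ) - 1 = (j + k + n : ℕ) := by
    push_cast
    ring
  simp only [mul_add_mul_eq_sub_mul_add_sub_one]
  rw [prod_Icc_sub_mul_add_sub_one, top_eq, descPochhammer_eval_eq_descFactorial]

/-- Spectral positivity for the second-variation operator at a totally geodesic
`S^{2k} ⊂ S^{2k+m}(1)`: with `P(j) = Π_{l=1}^{k+1}[j(2k+j−1) + (k+l−1)(k−l)]`, one has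
`P(j) ≥ 0` for all `j`, `P(j) = 0` iff `j = 0` or `j = 1`, and `P(j) > 0` for `j ≥ 2`. -/
theorem spherical_eigenvalue_nonneg (k : ℕ) (hk : 1 ≤ k) (j : ℕ) :
    0 ≤ ∏ l ∈ Finset.Icc 1 (k + 1),
        ((j : ℤ) * (2 * (k : ℤ) + (j : ℤ) - 1) + ((k : ℤ) + (l : ℤ) - 1) * ((k : ℤ) - (l : ℤ))) ∧
    ((∏ l ∈ Finset.Icc 1 (k + 1),
        ((j : ℤ) * (2 * (k : ℤ) + (j : ℤ) - 1) + ((k : ℤ) + (l : ℤ) - 1) * ((k : ℤ) - (l : ℤ)))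
          = 0) ↔ (j = 0 ∨ j = 1)) ∧
    (2 ≤ j → 0 < ∏ l ∈ Finset.Icc 1 (k + 1),
        ((j : ℤ) * (2 * (k : ℤ) + (j : ℤ) - 1) + ((k : ℤ) + (l : ℤ) - 1) * ((k : ℤ) - (l : ℤ)))) := by
  rw [prod_Icc_mul_add_mul_eq_descFactorial]
  refine ⟨Int.natCast_nonneg _, ?_, fun hj => ?_⟩
  · rw [Int.natCast_eq_zero, Nat.descFactorial_eq_zero_iff_lt]
    omega
  · rw [Int.natCast_pos, Nat.descFactorial_pos]
    omega
end

section
/- Let d₁, d₂ ≥ 1 be integers with d₁ + d₂ = 2k, set r_i = √(d_i/(2k)), and write ℝ^{2k+2} = ℝ^{d₁+1} ⊕ ℝ^{d₂+1}, x = (x₁, x₂). Let Σ = {x : |x₁| = r₁ and |x₂| = r₂} and μ(x) = (d₂ x₁, −d₁ x₂). For a real skew-symmetric (2k+2) × (2k+2) matrix A and b ∈ ℝ^{2k+2}, one has ⟨A x − ⟨b, x⟩ x + b, μ(x)⟩ = 0 for every x ∈ Σ if and only if b = 0 and A is block diagonal with respect to the decomposition ℝ^{d₁+1} ⊕ ℝ^{d₂+1}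 (i.e., A(ℝ^{d₁+1} ⊕ 0) ⊆ ℝ^{d₁+1} ⊕ 0 and A(0 ⊕ ℝ^{d₂+1}) ⊆ 0 ⊕ ℝ^{d₂+1}). -/
open Matrix

/-!
Since `μ` is tangent to the ambient sphere along `Σ`, the radial term `⟨b, x⟩x` drops out of the
normal component; since `A` is skew-symmetric, so do its diagonal blocks. With `x = (u, v)`,
`b = (b₁, b₂)` and `B` the off-diagonal block of `A`, what remains for `μ(x) = (p u, -q v)` is
`(p + q) ⟨u, B v⟩ + p ⟨b₁, u⟩ - q ⟨b₂, v⟩`. On a product of two spheres the three summands have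
different parities in `(u, v)`, so the sum vanishes identically only if each of them does, and a
linear form vanishing on a sphere of nonzero radius is zero.
-/

section CoordSphere

variable {R ι κ : Type*} [CommRing R] [Fintype ι] [Fintype κ] {r r₁ r₂ : R}

/-- The sphere `S(r)` about the origin of the coordinate space `R^ι`. It is cut out by the equation
`∑ uᵢ² = r²` rather than by a norm, so that it makes sense over any commutative ring. -/
def coordSphere (ι : Type*) [Fintype ι] (r : R) : Set (ι → R) :=
  {u | ∑ i, u i ^ 2 = r ^ 2}

theorem mem_coordSphere {u : ι → R} : u ∈ coordSphere ι r ↔ ∑ i, u i ^ 2 = r ^ 2 := Iff.rfl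

theorem neg_mem_coordSphere {u : ι → R} (hu : u ∈ coordSphere ι r) : -u ∈ coordSphere ι r := by
  simpa only [mem_coordSphere, Pi.neg_apply, neg_sq] using hu

theorem single_mem_coordSphere [DecidableEq ι] (i : ι) (r : R) :
    Pi.single i r ∈ coordSphere ι r := by
  simp [mem_coordSphere, Pi.single_apply, ite_pow]

theorem dotProduct_self_of_mem_coordSphere {u : ι → R} (hu : u ∈ coordSphere ι r) :
    u ⬝ᵥ u = r ^ 2 := by
  simpa only [mem_coordSphere, dotProduct, sq] using hu

variable [NoZeroDivisors R]

theorem eq_zero_of_forall_mem_coordSphere_dotProduct_eq_zero (hr : r ≠ 0) {c : ι → R}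
    (h : ∀ u ∈ coordSphere ι r, c ⬝ᵥ u = 0) : c = 0 := by
  classical
  funext i
  have hci : c i * r = 0 := by
    simpa only [dotProduct_single] using h _ (single_mem_coordSphere i r)
  exact (mul_eq_zero.1 hci).resolve_right hr

theorem matrix_eq_zero_of_forall_mem_coordSphere_dotProduct_eq_zero (hr₁ : r₁ ≠ 0) (hr₂ : r₂ ≠ 0)
    {B : Matrix ι κ R}
    (h : ∀ u ∈ coordSphere ι r₁, ∀ v ∈ coordSphere κ r₂, u ⬝ᵥ B *ᵥ v = 0) : B = 0 := by
  have mulVec_eq_zero : ∀ v ∈ coordSphere κ r₂, B *ᵥ v = 0 := fun v hv =>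
    eq_zero_of_forall_mem_coordSphere_dotProduct_eq_zero hr₁ fun u hu =>
      (dotProduct_comm _ _).trans (h u hu v hv)
  funext i
  exact eq_zero_of_forall_mem_coordSphere_dotProduct_eq_zero hr₂ fun v hv =>
    congrFun (mulVec_eq_zero v hv) i

theorem eq_zero_of_bilinear_add_linear_eq_zero_on_coordSpheres [NeZero (2 : R)]
    [Nonempty ι] [Nonempty κ] (hr₁ : r₁ ≠ 0) (hr₂ : r₂ ≠ 0)
    {B : Matrix ι κ R} {c : ι → R} {d : κ → R}
    (h : ∀ u ∈ coordSphere ι r₁, ∀ v ∈ coordSphere κ r₂,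
      u ⬝ᵥ B *ᵥ v + c ⬝ᵥ u + d ⬝ᵥ v = 0) :
    B = 0 ∧ c = 0 ∧ d = 0 := by
  classical
  have separate : ∀ u ∈ coordSphere ι r₁, ∀ v ∈ coordSphere κ r₂,
      u ⬝ᵥ B *ᵥ v = 0 ∧ c ⬝ᵥ u = 0 ∧ d ⬝ᵥ v = 0 := by
    intro u hu v hv
    have h_pos := h u hu v hv
    have h_neg_left := h (-u) (neg_mem_coordSphere hu) v hv
    have h_neg_right := h u hu (-v) (neg_mem_coordSphere hv)
    have h_neg := h (-u) (neg_mem_coordSphere hu) (-v) (neg_mem_coordSphere hv)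
    simp only [mulVec_neg, neg_dotProduct, dotProduct_neg, neg_neg] at h_neg_left h_neg_right h_neg
    have eq_zero_of_two_mul {a : R} (ha : 2 * a = 0) : a = 0 :=
      (mul_eq_zero.1 ha).resolve_left two_ne_zero
    have linear_left : c ⬝ᵥ u = 0 := eq_zero_of_two_mul <| eq_zero_of_two_mul <| by
      linear_combination h_pos - h_neg_left + h_neg_right - h_neg
    have linear_right : d ⬝ᵥ v = 0 := eq_zero_of_two_mul <| eq_zero_of_two_mul <| by
      linear_combination h_pos + h_neg_left - h_neg_right - h_neg
    exact ⟨by linear_combination h_pos - linear_left - linear_right, linear_left, linear_right⟩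
  obtain ⟨i⟩ := ‹Nonempty ι›
  obtain ⟨j⟩ := ‹Nonempty κ›
  refine ⟨matrix_eq_zero_of_forall_mem_coordSphere_dotProduct_eq_zero hr₁ hr₂
      fun u hu v hv => (separate u hu v hv).1,
    eq_zero_of_forall_mem_coordSphere_dotProduct_eq_zero hr₁ fun u hu =>
      (separate u hu _ (single_mem_coordSphere j r₂)).2.1,
    eq_zero_of_forall_mem_coordSphere_dotProduct_eq_zero hr₂ fun v hv =>
      (separate _ (single_mem_coordSphere i r₁) v hv).2.2⟩

end CoordSphere

theorem dotProduct_mulVec_self_of_transpose_eq_neg {R ι : Type*} [CommRing R]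
    [NoZeroDivisors R] [NeZero (2 : R)] [Fintype ι] {A : Matrix ι ι R} (hA : Aᵀ = -A)
    (x : ι → R) : x ⬝ᵥ A *ᵥ x = 0 := by
  have eq_neg_self : x ⬝ᵥ A *ᵥ x = -(x ⬝ᵥ A *ᵥ x) :=
    calc x ⬝ᵥ A *ᵥ x = Aᵀ *ᵥ x ⬝ᵥ x := by rw [dotProduct_mulVec, mulVec_transpose]
      _ = -(x ⬝ᵥ A *ᵥ x) := by rw [hA, neg_mulVec, neg_dotProduct, dotProduct_comm]
  have two_mul_eq_zero : 2 * (x ⬝ᵥ A *ᵥ x) = 0 := by linear_combination eq_neg_self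
  exact (mul_eq_zero.1 two_mul_eq_zero).resolve_left two_ne_zero

section NormalComponent

variable {R ι κ : Type*} [CommRing R]

/-- The normal field `x = (x₁, x₂) ↦ (p x₁, -q x₂)` along a product of spheres centred at the origin
in `R^ι ⊕ R^κ`; the Clifford hypersurface has `p = d₂` and `q = d₁`. -/
def cliffordNormal (p q : R) (x : ι ⊕ κ → R) : ι ⊕ κ → R :=
  Sum.elim (fun i => p * x (Sum.inl i)) (fun j => -q * x (Sum.inr j))

/-- The conformal vector field `x ↦ A x - ⟨b, x⟩ x + b` of the unit sphere associated to a
skew-symmetric matrix `A` and a vector `b`. -/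
def conformalField [Fintype ι] (A : Matrix ι ι R) (b x : ι → R) : ι → R :=
  A *ᵥ x - (b ⬝ᵥ x) • x + b

variable [Fintype ι] [Fintype κ] {p q r₁ r₂ : R}

theorem dotProduct_cliffordNormal (p q : R) (y x : ι ⊕ κ → R) :
    y ⬝ᵥ cliffordNormal p q x =
      p * (y ∘ Sum.inl ⬝ᵥ x ∘ Sum.inl) - q * (y ∘ Sum.inr ⬝ᵥ x ∘ Sum.inr) := by
  have normal_eq : cliffordNormal p q x = Sum.elim (p • x ∘ Sum.inl) (-q • x ∘ Sum.inr) := rfl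
  rw [normal_eq, ← Sum.elim_comp_inl_inr y, sumElim_dotProduct_sumElim]
  simp only [Sum.elim_comp_inl, Sum.elim_comp_inr, dotProduct_smul, smul_eq_mul]
  ring

theorem self_dotProduct_cliffordNormal (hpq : p * r₁ ^ 2 = q * r₂ ^ 2) {x : ι ⊕ κ → R}
    (hx₁ : x ∘ Sum.inl ∈ coordSphere ι r₁) (hx₂ : x ∘ Sum.inr ∈ coordSphere κ r₂) :
    x ⬝ᵥ cliffordNormal p q x = 0 := by
  rw [dotProduct_cliffordNormal, dotProduct_self_of_mem_coordSphere hx₁,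
    dotProduct_self_of_mem_coordSphere hx₂, hpq, sub_self]

variable [NoZeroDivisors R] [NeZero (2 : R)]
  {A : Matrix (ι ⊕ κ) (ι ⊕ κ) R}

theorem mulVec_dotProduct_cliffordNormal (hA : Aᵀ = -A) (x : ι ⊕ κ → R) :
    A *ᵥ x ⬝ᵥ cliffordNormal p q x =
      (p + q) * (x ∘ Sum.inl ⬝ᵥ A.toBlocks₁₂ *ᵥ (x ∘ Sum.inr)) := by
  have skew (s t : ι ⊕ κ) : A t s = -A s t := congrFun₂ hA s t
  have block₁₁ : x ∘ Sum.inl ⬝ᵥ A.toBlocks₁₁ *ᵥ (x ∘ Sum.inl) = 0 :=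
    dotProduct_mulVec_self_of_transpose_eq_neg (ext fun _ _ => skew _ _) _
  have block₂₂ : x ∘ Sum.inr ⬝ᵥ A.toBlocks₂₂ *ᵥ (x ∘ Sum.inr) = 0 :=
    dotProduct_mulVec_self_of_transpose_eq_neg (ext fun _ _ => skew _ _) _
  have block₂₁ : x ∘ Sum.inr ⬝ᵥ A.toBlocks₂₁ *ᵥ (x ∘ Sum.inl) =
      -(x ∘ Sum.inl ⬝ᵥ A.toBlocks₁₂ *ᵥ (x ∘ Sum.inr)) := by
    have block_eq : A.toBlocks₂₁ = -A.toBlocks₁₂ᵀ := ext fun _ _ => skew _ _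
    rw [block_eq, neg_mulVec, dotProduct_neg, mulVec_transpose, dotProduct_comm, dotProduct_mulVec]
  rw [dotProduct_cliffordNormal, ← fromBlocks_toBlocks A, fromBlocks_mulVec]
  simp only [Sum.elim_comp_inl, Sum.elim_comp_inr, dotProduct_comm _ (x ∘ _), dotProduct_add,
    toBlocks_fromBlocks₁₂, block₁₁, block₂₂, block₂₁]
  ring

theorem conformalField_dotProduct_cliffordNormal (hA : Aᵀ = -A) (b : ι ⊕ κ → R)
    {x : ι ⊕ κ → R} (hx : x ⬝ᵥ cliffordNormal p q x = 0) :
    conformalField A b x ⬝ᵥ cliffordNormal p q x =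
      x ∘ Sum.inl ⬝ᵥ ((p + q) • A.toBlocks₁₂) *ᵥ (x ∘ Sum.inr) +
        (p • b ∘ Sum.inl) ⬝ᵥ x ∘ Sum.inl + (-q • b ∘ Sum.inr) ⬝ᵥ x ∘ Sum.inr := by
  rw [conformalField, add_dotProduct, sub_dotProduct, smul_dotProduct, hx,
    mulVec_dotProduct_cliffordNormal hA, dotProduct_cliffordNormal]
  simp only [smul_mulVec, dotProduct_smul, smul_dotProduct, smul_eq_mul]
  ring

end NormalComponent

theorem clifford_restriction_projection_kernel_general {R ι κ : Type*} [CommRing R]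
    [NoZeroDivisors R] [NeZero (2 : R)] [Fintype ι] [Fintype κ] [Nonempty ι] [Nonempty κ]
    {p q r₁ r₂ : R} (hr₁ : r₁ ≠ 0) (hp : p ≠ 0) (hadd : p + q ≠ 0)
    (hpq : p * r₁ ^ 2 = q * r₂ ^ 2) (A : Matrix (ι ⊕ κ) (ι ⊕ κ) R) (hA : Aᵀ = -A)
    (b : ι ⊕ κ → R) :
    (∀ x : ι ⊕ κ → R, x ∘ Sum.inl ∈ coordSphere ι r₁ → x ∘ Sum.inr ∈ coordSphere κ r₂ →
        conformalField A b x ⬝ᵥ cliffordNormal p q x = 0)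
      ↔ (b = 0 ∧ (∀ i j, A (Sum.inl i) (Sum.inr j) = 0)
          ∧ (∀ i j, A (Sum.inr j) (Sum.inl i) = 0)) := by
  constructor
  · intro h
    have hqr₂ : q * r₂ ^ 2 ≠ 0 := hpq ▸ mul_ne_zero hp (pow_ne_zero 2 hr₁)
    have hq : q ≠ 0 := left_ne_zero_of_mul hqr₂
    have hr₂ : r₂ ≠ 0 := (pow_ne_zero_iff two_ne_zero).1 (right_ne_zero_of_mul hqr₂)
    obtain ⟨hB, hb₁, hb₂⟩ := eq_zero_of_bilinear_add_linear_eq_zero_on_coordSpheres hr₁ hr₂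
      fun u hu v hv =>
        (conformalField_dotProduct_cliffordNormal hA b (x := Sum.elim u v)
          (self_dotProduct_cliffordNormal hpq hu hv)).symm.trans (h (Sum.elim u v) hu hv)
    have hA₁₂ (i : ι) (j : κ) : A (Sum.inl i) (Sum.inr j) = 0 :=
      (mul_eq_zero.1 (congrFun₂ hB i j)).resolve_left hadd
    refine ⟨?_, hA₁₂, fun i j => ?_⟩
    · funext s
      rcases s with i | j
      · exact (mul_eq_zero.1 (congrFun hb₁ i)).resolve_left hp
      · exact (mul_eq_zero.1 (congrFun hb₂ j)).resolve_left (neg_ne_zero.2 hq)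
    · exact (congrFun₂ hA (Sum.inl i) (Sum.inr j)).trans (neg_eq_zero.2 (hA₁₂ i j))
  · rintro ⟨rfl, hA₁₂, -⟩ x hx₁ hx₂
    have hB : A.toBlocks₁₂ = 0 := ext hA₁₂
    rw [conformalField_dotProduct_cliffordNormal hA 0 (self_dotProduct_cliffordNormal hpq hx₁ hx₂)]
    simp [hB]

/-- Kernel of the restriction-projection map at a Clifford hypersurface
`Σ = S^{d₁}(r₁) × S^{d₂}(r₂) ⊂ S^{2k+1}(1)` (with `r_i = √(d_i/(2k))`, normal frame
`μ(x) = (d₂x₁, −d₁x₂)`): for `A` skew-symmetric and `b ∈ ℝ^{2k+2}`, one has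
`⟨Ax − ⟨b,x⟩x + b, μ(x)⟩ = 0` for all `x ∈ Σ` iff `b = 0` and `A` is block diagonal
with respect to `ℝ^{2k+2} = ℝ^{d₁+1} ⊕ ℝ^{d₂+1}`. -/
theorem clifford_restriction_projection_kernel (d₁ d₂ k : ℕ) (h₁ : 1 ≤ d₁) (h₂ : 1 ≤ d₂)
    (hk : d₁ + d₂ = 2 * k)
    (A : Matrix (Fin (d₁ + 1) ⊕ Fin (d₂ + 1)) (Fin (d₁ + 1) ⊕ Fin (d₂ + 1)) ℝ)
    (hA : Aᵀ = -A) (b : (Fin (d₁ + 1) ⊕ Fin (d₂ + 1)) → ℝ) :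
    (∀ x : (Fin (d₁ + 1) ⊕ Fin (d₂ + 1)) → ℝ,
        (∑ i, x (Sum.inl i) ^ 2 = (d₁ : ℝ) / (2 * k)) →
        (∑ i, x (Sum.inr i) ^ 2 = (d₂ : ℝ) / (2 * k)) →
        (A.mulVec x - (b ⬝ᵥ x) • x + b) ⬝ᵥ
          (Sum.elim (fun i => (d₂ : ℝ) * x (Sum.inl i))
            (fun i => -(d₁ : ℝ) * x (Sum.inr i))) = 0)
      ↔ (b = 0 ∧ (∀ i j, A (Sum.inl i) (Sum.inr j) = 0)
          ∧ (∀ i j, A (Sum.inr j) (Sum.inl i) = 0)) := by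
  have hd₁ : (0 : ℝ) < d₁ := by exact_mod_cast h₁
  have hd₂ : (0 : ℝ) < d₂ := by exact_mod_cast h₂
  have hk₀ : (0 : ℝ) < k := by exact_mod_cast (by omega : 0 < k)
  have hr₁ : (0 : ℝ) < d₁ / (2 * k) := by positivity
  have hr₂ : (0 : ℝ) < d₂ / (2 * k) := by positivity
  have hbalance : (d₂ : ℝ) * √(d₁ / (2 * k)) ^ 2 = d₁ * √(d₂ / (2 * k)) ^ 2 := by
    rw [Real.sq_sqrt hr₁.le, Real.sq_sqrt hr₂.le]
    ring
  rw [← Real.sq_sqrt hr₁.le, ← Real.sq_sqrt hr₂.le]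
  exact clifford_restriction_projection_kernel_general (Real.sqrt_ne_zero'.2 hr₁) hd₂.ne'
    (add_pos hd₂ hd₁).ne' hbalance A hA b
end

section
/- For an integer k ≥ 1, define N_k = Π_{l=1}^{k+1} [ (k + l)(k − l + 1) − 4k ]. Then: N_k > 0 if and only if k = 1; N_k = 0 if and only if k = 3; and N_k < 0 if and only if k = 2 or k ≥ 4. -/
/-!
The last three factors of `N_k`, at `l = k - 1, k, k + 1`, are `-2`, `-2k` and `-4k`, so that
`N_k = -16 k² ∏_{l=1}^{k-2} [(k+l)(k-l+1) - 4k]` for `k ≥ 2`. The remaining factors decrease in `l`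
down to `2(k - 3)` at `l = k - 2`: they are all positive when `k ≥ 4`, there are none when `k = 2`,
and the only one vanishes when `k = 3`.
-/

/-- The `l`-th factor of the second-variation operator
`∏_{l=1}^{k+1} [Δ - 4k + (k+l)(k-l+1)]` on constant functions, where `Δ` acts as `0`. -/
def cliffordFactor {R : Type*} [CommRing R] (k l : R) : R :=
  (k + l) * (k - l + 1) - 4 * k

/-- The eigenvalue `N_k` of the second-variation operator on constant functions. The factors are
taken in `ℤ` because `ℕ` subtraction would truncate their negative values. -/
def cliffordConstantEigenvalue (k : ℕ) : ℤ :=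
  ∏ l ∈ Finset.Icc 1 (k + 1), cliffordFactor (k : ℤ) (l : ℤ)

theorem cliffordFactor_eq_mul_add {R : Type*} [CommRing R] (k l : R) :
    cliffordFactor k l = (k - 2 - l) * (k - 3 + l) + 2 * (k - 3) := by
  unfold cliffordFactor
  ring

theorem cliffordFactor_pos {R : Type*} [CommRing R] [LinearOrder R] [IsStrictOrderedRing R]
    {k l : R} (hk : 3 < k) (hl : 3 - k ≤ l) (hlk : l ≤ k - 2) : 0 < cliffordFactor k l := by
  have h_mul : 0 ≤ (k - 2 - l) * (k - 3 + l) := mul_nonneg (by linarith) (by linarith)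
  rw [cliffordFactor_eq_mul_add]
  linarith

theorem cliffordConstantEigenvalue_add_two (m : ℕ) :
    cliffordConstantEigenvalue (m + 2) =
      -16 * ((m : ℤ) + 2) ^ 2 * ∏ l ∈ Finset.Icc 1 m, cliffordFactor ((m : ℤ) + 2) (l : ℤ) := by
  have h_last_three : cliffordFactor ((m : ℤ) + 2) (m + 1) *
      (cliffordFactor ((m : ℤ) + 2) (m + 1 + 1) * cliffordFactor ((m : ℤ) + 2) (m + 2 + 1)) =
        -16 * ((m : ℤ) + 2) ^ 2 := by
    unfold cliffordFactor
    ring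
  rw [← h_last_three, cliffordConstantEigenvalue, Finset.prod_Icc_succ_top (by lia),
    Finset.prod_Icc_succ_top (by lia), Finset.prod_Icc_succ_top (by lia)]
  push_cast
  ring

theorem cliffordConstantEigenvalue_one : cliffordConstantEigenvalue 1 = 8 := by
  decide

theorem cliffordConstantEigenvalue_three : cliffordConstantEigenvalue 3 = 0 := by
  simp [cliffordConstantEigenvalue_add_two 1, cliffordFactor]

theorem cliffordConstantEigenvalue_neg {k : ℕ} (hk : 2 ≤ k) (hk3 : k ≠ 3) :
    cliffordConstantEigenvalue k < 0 := by
  obtain ⟨m, rfl⟩ := Nat.exists_eq_add_of_le' hk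
  have h_prod : 0 < ∏ l ∈ Finset.Icc 1 m, cliffordFactor ((m : ℤ) + 2) (l : ℤ) := by
    refine Finset.prod_pos fun l hl => ?_
    obtain ⟨hl1, hlm⟩ := Finset.mem_Icc.mp hl
    exact cliffordFactor_pos (by lia) (by lia) (by lia)
  have h_lead : -16 * ((m : ℤ) + 2) ^ 2 < 0 := mul_neg_of_neg_of_pos (by norm_num) (by positivity)
  rw [cliffordConstantEigenvalue_add_two]
  exact mul_neg_of_neg_of_pos h_lead h_prod

/-- Sign of `N_k = Π_{l=1}^{k+1}[(k+l)(k−l+1) − 4k]`, the eigenvalue on constants of the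
second-variation operator of the Graham–Witten energy at a Clifford hypersurface:
`N_k > 0` iff `k = 1`, `N_k = 0` iff `k = 3`, and `N_k < 0` iff `k = 2` or `k ≥ 4`. -/
theorem clifford_constant_eigenvalue_sign (k : ℕ) (hk : 1 ≤ k) :
    (0 < ∏ l ∈ Finset.Icc 1 (k + 1),
        (((k : ℤ) + (l : ℤ)) * ((k : ℤ) - (l : ℤ) + 1) - 4 * (k : ℤ)) ↔ k = 1) ∧
    ((∏ l ∈ Finset.Icc 1 (k + 1),
        (((k : ℤ) + (l : ℤ)) * ((k : ℤ) - (l : ℤ) + 1) - 4 * (k : ℤ)) = 0) ↔ k = 3) ∧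
    (∏ l ∈ Finset.Icc 1 (k + 1),
        (((k : ℤ) + (l : ℤ)) * ((k : ℤ) - (l : ℤ) + 1) - 4 * (k : ℤ)) < 0
      ↔ (k = 2 ∨ 4 ≤ k)) := by
  change (0 < cliffordConstantEigenvalue k ↔ k = 1) ∧ (cliffordConstantEigenvalue k = 0 ↔ k = 3) ∧
    (cliffordConstantEigenvalue k < 0 ↔ k = 2 ∨ 4 ≤ k)
  obtain rfl | rfl | ⟨hk2, hk3⟩ : k = 1 ∨ k = 3 ∨ (2 ≤ k ∧ k ≠ 3) := by lia
  · simp [cliffordConstantEigenvalue_one]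
  · simp [cliffordConstantEigenvalue_three]
  · have h_neg := cliffordConstantEigenvalue_neg hk2 hk3
    lia
end
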